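/- For every natural number j and every homogeneous pair F in the model of C^∞(S^{1|1}), the graded Leibniz formula holds: D^j ∘ M_F = Σ_{i=0}^{j} (j choose i)_s · (−1)^{|F|(j−i)} · M_{D^i F} ∘ D^{j−i} as operators on pairs, where M_a denotes the multiplication operator M_a(G) = aG (using the pair product) and |F| ∈ {0,1} is the parity of F. -/

import Mathlib

open Real Function

/-- Model of C^∞(S^{1|1}): a pair (f₀, f₁) represents f₀(x) + θ f₁(x). -/
abbrev SPair : Type := (ℝ → ℝ) × (ℝ → ℝ)

/-- The odd vector field η̄ = ∂_θ − θ∂ₓ acting on pairs. -/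
noncomputable def D (F : SPair) : SPair :=
  (F.2, fun x => -deriv F.1 x)

/-- Product of super functions: (f₀ + θf₁)(g₀ + θg₁) = f₀g₀ + θ(f₀g₁ + f₁g₀). -/
def pmul (F G : SPair) : SPair :=
  (fun x => F.1 x * G.1 x, fun x => F.1 x * G.2 x + F.2 x * G.1 x)

/-- Membership in the model: both components smooth and 2π-periodic. -/
def InModel (F : SPair) : Prop :=
  ContDiff ℝ (⊤ : ℕ∞) F.1 ∧ ContDiff ℝ (⊤ : ℕ∞) F.2 ∧
    Periodic F.1 (2 * π) ∧ Periodic F.2 (2 * π)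

/-- F is homogeneous of parity p: even (p = 0) iff odd part vanishes,
odd (p = 1) iff even part vanishes. -/
def IsHom (F : SPair) (p : ℕ) : Prop :=
  (p = 0 ∧ F.2 = 0) ∨ (p = 1 ∧ F.1 = 0)

/-- The super binomial coefficient (j choose i)_s. -/
def sbinom (j i : ℕ) : ℕ :=
  if i % 2 = 0 ∨ j % 2 = 1 then Nat.choose (j / 2) (i / 2) else 0

/-- The Lie derivative 𝔏^λ_F of λ-densities along the contact field X_F,
for F = (f, k) (extended additively from the homogeneous cases). -/
noncomputable def Lder (l : ℝ) (F G : SPair) : SPair :=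
  (fun x => F.1 x * deriv G.1 x + l * deriv F.1 x * G.1 x
      + (1 / 2) * F.2 x * G.2 x,
   fun x => F.1 x * deriv G.2 x + (l + 1 / 2) * deriv F.1 x * G.2 x
      + (1 / 2) * F.2 x * deriv G.1 x + l * deriv F.2 x * G.1 x)

/-- The contact bracket {F, G}, extended bilinearly from the homogeneous
component formulas. -/
noncomputable def cbracket (F G : SPair) : SPair :=
  (fun x => F.1 x * deriv G.1 x - deriv F.1 x * G.1 x
      + (1 / 2) * F.2 x * G.2 x,
   fun x => F.1 x * deriv G.2 x - (1 / 2) * deriv F.1 x * G.2 x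
      + (1 / 2) * F.2 x * deriv G.1 x - deriv F.2 x * G.1 x)

def Sm (F : SPair) : Prop := ContDiff ℝ (⊤ : ℕ∞) F.1 ∧ ContDiff ℝ (⊤ : ℕ∞) F.2

def Par (F : SPair) (q : ℕ) : Prop := (Even q ∧ F.2 = 0) ∨ (Odd q ∧ F.1 = 0)

lemma Sm.dD {F : SPair} (h : Sm F) : Sm (D F) := by
  refine ⟨h.2, ?_⟩
  have h1 : ContDiff ℝ (⊤ : ℕ∞) (deriv F.1) := (contDiff_infty_iff_deriv.1 h.1).2
  exact h1.neg

lemma Sm.iter {F : SPair} (h : Sm F) (n : ℕ) : Sm (D^[n] F) := by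
  induction n with
  | zero => exact h
  | succ n ih => rw [iterate_succ_apply']; exact ih.dD

lemma Sm.pm {F G : SPair} (h : Sm F) (k : Sm G) : Sm (pmul F G) :=
  ⟨h.1.mul k.1, (h.1.mul k.2).add (h.2.mul k.1)⟩

lemma Sm.lin {F G : SPair} (h : Sm F) (k : Sm G) (c : ℝ) : Sm (c • F + G) :=
  ⟨(contDiff_const.mul h.1).add k.1, (contDiff_const.mul h.2).add k.2⟩

lemma Sm.da {F : SPair} (h : Sm F) (x : ℝ) : DifferentiableAt ℝ F.1 x :=
  (h.1.differentiable (by simp)).differentiableAt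

lemma Par.dD {F : SPair} {q : ℕ} (h : Par F q) : Par (D F) (q + 1) := by
  rcases h with ⟨a, b⟩ | ⟨a, b⟩
  · exact Or.inr ⟨a.add_one, b⟩
  · refine Or.inl ⟨a.add_one, ?_⟩
    funext x
    simp [D, b]

lemma Par.iter {F : SPair} {q : ℕ} (h : Par F q) (n : ℕ) : Par (D^[n] F) (q + n) := by
  induction n with
  | zero => exact h
  | succ n ih => rw [iterate_succ_apply']; exact ih.dD

lemma D_lin {F G : SPair} (h : Sm F) (k : Sm G) (c : ℝ) : D (c • F + G) = c • D F + D G := by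
  refine Prod.ext rfl ?_
  funext x
  have : HasDerivAt (c • F + G).1 (c * deriv F.1 x + deriv G.1 x) x :=
    ((h.da x).hasDerivAt.const_mul c).add (k.da x).hasDerivAt
  simp only [D, this.deriv, Prod.snd_add, Prod.smul_snd, Pi.add_apply, Pi.smul_apply, smul_eq_mul]
  ring

lemma D_zero : D 0 = 0 := by
  refine Prod.ext rfl ?_
  funext x
  simp [D]

lemma D_sum (c : ℕ → ℝ) (P : ℕ → SPair) (h : ∀ i, Sm (P i)) (n : ℕ) :
    Sm (∑ i ∈ Finset.range n, c i • P i) ∧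
    D (∑ i ∈ Finset.range n, c i • P i) = ∑ i ∈ Finset.range n, c i • D (P i) := by
  induction n with
  | zero => exact ⟨⟨contDiff_const, contDiff_const⟩, by simpa using D_zero⟩
  | succ n ih =>
    rw [Finset.sum_range_succ, Finset.sum_range_succ, add_comm, add_comm _ (c n • D (P n))]
    exact ⟨(h n).lin ih.1 _, by rw [D_lin (h n) ih.1, ih.2]⟩

lemma D_pmul {A B : SPair} {q : ℕ} (h : Par A q) (hA : Sm A) (hB : Sm B) :
    D (pmul A B) = pmul (D A) B + (-1 : ℝ) ^ q • pmul A (D B) := by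
  have hd : ∀ x, deriv (fun x => A.1 x * B.1 x) x = deriv A.1 x * B.1 x + A.1 x * deriv B.1 x :=
    fun x => ((hA.da x).hasDerivAt.mul (hB.da x).hasDerivAt).deriv
  rcases h with ⟨a, b⟩ | ⟨a, b⟩
  · rw [a.neg_one_pow]
    refine Prod.ext ?_ ?_ <;> funext x
    · simp [D, pmul, b]
    · simp only [D, pmul, hd]
      simp [b]
      ring
  · rw [a.neg_one_pow]
    refine Prod.ext ?_ ?_ <;> funext x
    · simp [D, pmul, b]
    · simp only [D, pmul, hd]
      simp [b]

lemma sb_zero (j : ℕ) : sbinom j 0 = 1 := by simp [sbinom]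

lemma sb_top (j : ℕ) : sbinom j (j + 1) = 0 := by
  unfold sbinom
  split_ifs with h
  · exact Nat.choose_eq_zero_of_lt (by omega)
  · rfl

lemma sb_succ (j i : ℕ) :
    (sbinom (j + 1) (i + 1) : ℝ) = sbinom j i + (-1) ^ (i + 1) * sbinom j (i + 1) := by
  rcases Nat.even_or_odd' i with ⟨m, rfl | rfl⟩ <;> rcases Nat.even_or_odd' j with ⟨n, rfl | rfl⟩
  · have e1 : (2 * n + 1) / 2 = n := by omega
    have e2 : (2 * m + 1) / 2 = m := by omega
    simp [sbinom, e1, e2, Nat.add_mod]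
  · have e1 : (2 * n + 1) / 2 = n := by omega
    have e2 : (2 * m + 1) / 2 = m := by omega
    simp [sbinom, e1, e2, Nat.add_mod, pow_succ, pow_mul]
  · have e1 : (2 * n + 1) / 2 = n := by omega
    have e2 : (2 * m + 1) / 2 = m := by omega
    have e3 : (2 * m + 1 + 1) / 2 = m + 1 := by omega
    simp [sbinom, e1, e3, Nat.add_mod, pow_succ, pow_mul]
  · have e1 : (2 * n + 1) / 2 = n := by omega
    have e2 : (2 * m + 1) / 2 = m := by omega
    have e3 : (2 * m + 1 + 1) / 2 = m + 1 := by omega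
    have e4 : (2 * n + 1 + 1) / 2 = n + 1 := by omega
    simp [sbinom, e1, e2, e3, e4, Nat.add_mod, pow_succ, pow_mul, Nat.choose_succ_succ]

lemma leib (p : ℕ) (F G : SPair) (hp : Par F p) (hF : Sm F) (hG : Sm G) (j : ℕ) :
    D^[j] (pmul F G) =
      ∑ i ∈ Finset.range (j + 1),
        ((sbinom j i : ℝ) * (-1 : ℝ) ^ (p * (j - i))) •
          pmul (D^[i] F) (D^[j - i] G) := by
  induction j with
  | zero => simp [sb_zero]
  | succ j ih =>
    rw [iterate_succ_apply', ih,
      (D_sum _ _ (fun i => (hF.iter i).pm (hG.iter (j - i))) (j + 1)).2]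
    have h1 : ∀ i ∈ Finset.range (j + 1),
        ((sbinom j i : ℝ) * (-1 : ℝ) ^ (p * (j - i))) • D (pmul (D^[i] F) (D^[j - i] G)) =
        ((sbinom j i : ℝ) * (-1 : ℝ) ^ (p * (j - i))) • pmul (D^[i + 1] F) (D^[j - i] G) +
        ((-1) ^ i * (sbinom j i : ℝ) * (-1 : ℝ) ^ (p * (j + 1 - i))) •
          pmul (D^[i] F) (D^[j + 1 - i] G) := by
      intro i hi
      have hi' : i ≤ j := by simpa [Nat.lt_succ_iff] using hi
      have e : j + 1 - i = (j - i) + 1 := by omega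
      rw [D_pmul (hp.iter i) (hF.iter i) (hG.iter _), e, iterate_succ_apply', iterate_succ_apply',
        smul_add, smul_smul]
      congr 2
      rw [mul_add, pow_add, pow_add, mul_one]
      ring
    rw [Finset.sum_congr rfl h1, Finset.sum_add_distrib]
    have h2 := Finset.sum_range_succ (fun i =>
      ((-1) ^ i * (sbinom j i : ℝ) * (-1 : ℝ) ^ (p * (j + 1 - i))) •
          pmul (D^[i] F) (D^[j + 1 - i] G)) (j + 1)
    simp only [sb_top, Nat.cast_zero, mul_zero, zero_mul, zero_smul, add_zero] at h2
    rw [← h2, Finset.sum_range_succ' _ (j + 1), Finset.sum_range_succ' _ (j + 1), ← add_assoc,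
      ← Finset.sum_add_distrib]
    congr 1
    · refine Finset.sum_congr rfl fun i _ => ?_
      rw [sb_succ, Nat.add_sub_add_right, ← add_smul]
      congr 1
      ring
    · simp [sb_zero]

/-- Graded Leibniz formula: η̄^j ∘ M_F = Σ_i (j choose i)_s (−1)^{|F|(j−i)}
M_{η̄^i F} ∘ η̄^{j−i} on the model of C^∞(S^{1|1}). -/
theorem stmt7 (j : ℕ) (F : SPair) (pF : ℕ)
    (hFhom : IsHom F pF) (hFmod : InModel F)
    (G : SPair) (hGmod : InModel G) :
    D^[j] (pmul F G) =
      ∑ i ∈ Finset.range (j + 1),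
        ((sbinom j i : ℝ) * (-1 : ℝ) ^ (pF * (j - i))) •
          pmul (D^[i] F) (D^[j - i] G) := by
  refine leib pF F G ?_ ⟨hFmod.1, hFmod.2.1⟩ ⟨hGmod.1, hGmod.2.1⟩ j
  rcases hFhom with ⟨rfl, h⟩ | ⟨rfl, h⟩
  · exact Or.inl ⟨Even.zero, h⟩
  · exact Or.inr ⟨odd_one, h⟩
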